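/- arXiv:1606.00272 — 2 statements merged into one kernel-verified Lean document; each statement's English description precedes it below -/
import Mathlib

section
/- Let R be a commutative ring, I an ideal of R, and n ≥ 4. Then in St*(n,R,I), for every M ∈ E(n,R), r ∈ R and a ∈ I, the relation F(Me₁·r + Me₂, M*e₃·a) = F(Me₁, M*e₃·ar)·F(Me₂, M*e₃·a) holds, where M* = (Mᵗ)⁻¹. -/
/-- The set of elementary transvections inside `GL n R`. -/
def transvectionSet (n : ℕ) (R : Type) [CommRing R] :
    Set (Matrix.GeneralLinearGroup (Fin n) R) :=
  {M | ∃ (i j : Fin n) (_ : i ≠ j) (r : R),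
    (M : Matrix (Fin n) (Fin n) R) = 1 + Matrix.single i j r}

/-- The elementary subgroup `E(n, R) ≤ GL(n, R)`. -/
def Elem (n : ℕ) (R : Type) [CommRing R] : Subgroup (Matrix.GeneralLinearGroup (Fin n) R) :=
  Subgroup.closure (transvectionSet n R)

/-- The set `E(n,R)e₁` of first columns of elementary matrices. -/
def Ecol (n : ℕ) (R : Type) [CommRing R] [NeZero n] : Set (Fin n → R) :=
  {u | ∃ M ∈ Elem n R, u = fun i => (M : Matrix (Fin n) (Fin n) R) i 0}

/-- The matrix `t(u, v) = 1 + u·vᵗ`. -/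
def tMat {n : ℕ} {R : Type} [CommRing R] (u v : Fin n → R) : Matrix (Fin n) (Fin n) R :=
  1 + Matrix.vecMulVec u v

/-- The `k`-th column of an invertible matrix. -/
def colM {n : ℕ} {R : Type} [CommRing R] (M : Matrix.GeneralLinearGroup (Fin n) R)
    (k : Fin n) : Fin n → R :=
  fun i => (M : Matrix (Fin n) (Fin n) R) i k

/-- The `k`-th column of the contragredient matrix `M* = (Mᵗ)⁻¹ = (M⁻¹)ᵗ`. -/
def starCol {n : ℕ} {R : Type} [CommRing R] (M : Matrix.GeneralLinearGroup (Fin n) R)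
    (k : Fin n) : Fin n → R :=
  fun i => ((M⁻¹ : Matrix.GeneralLinearGroup (Fin n) R) : Matrix (Fin n) (Fin n) R) k i

/-- Unimodularity of the `n × 2` matrix with columns `u`, `w`: it admits a left inverse. -/
def Unimodular2 {n : ℕ} {R : Type} [CommRing R] (u w : Fin n → R) : Prop :=
  ∃ x y : Fin n → R,
    dotProduct x u = 1 ∧ dotProduct x w = 0 ∧
    dotProduct y u = 0 ∧ dotProduct y w = 1
/-- Generators `F(u,v)` and `S(u,v)` of the group `St*(n, R, I)`. -/
inductive StarGen (n : ℕ) (R : Type) [CommRing R] [NeZero n] (I : Ideal R) : Type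
  | F (u v : Fin n → R) (hu : u ∈ Ecol n R) (hv : ∀ i, v i ∈ I)
      (ho : dotProduct u v = 0) : StarGen n R I
  | S (u v : Fin n → R) (hu : ∀ i, u i ∈ I) (hv : v ∈ Ecol n R)
      (ho : dotProduct u v = 0) : StarGen n R I

/-- The relations (R1)–(R4) of the group `St*(n, R, I)`. -/
inductive StarRels (n : ℕ) (R : Type) [CommRing R] [NeZero n] (I : Ideal R) :
    FreeGroup (StarGen n R I) → Prop
  | addF (u v w : Fin n → R) (hu : u ∈ Ecol n R) (hv : ∀ i, v i ∈ I) (hw : ∀ i, w i ∈ I)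
      (hvw : ∀ i, (v + w) i ∈ I) (o1 : dotProduct u v = 0)
      (o2 : dotProduct u w = 0) (o3 : dotProduct u (v + w) = 0) :
      StarRels n R I ((FreeGroup.of (StarGen.F u v hu hv o1) : FreeGroup (StarGen n R I)) *
        FreeGroup.of (StarGen.F u w hu hw o2) * (FreeGroup.of (StarGen.F u (v + w) hu hvw o3))⁻¹)
  | addS (u w v : Fin n → R) (hu : ∀ i, u i ∈ I) (hw : ∀ i, w i ∈ I)
      (huw : ∀ i, (u + w) i ∈ I) (hv : v ∈ Ecol n R) (o1 : dotProduct u v = 0)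
      (o2 : dotProduct w v = 0) (o3 : dotProduct (u + w) v = 0) :
      StarRels n R I ((FreeGroup.of (StarGen.S u v hu hv o1) : FreeGroup (StarGen n R I)) *
        FreeGroup.of (StarGen.S w v hw hv o2) * (FreeGroup.of (StarGen.S (u + w) v huw hv o3))⁻¹)
  | conjF (u v u' v' : Fin n → R) (hu : u ∈ Ecol n R) (hv : ∀ i, v i ∈ I)
      (o1 : dotProduct u v = 0) (hu' : u' ∈ Ecol n R) (hv' : ∀ i, v' i ∈ I)
      (o2 : dotProduct u' v' = 0)
      (hu'' : Matrix.mulVec (tMat u v) u' ∈ Ecol n R)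
      (hv'' : ∀ i, Matrix.mulVec (1 - Matrix.vecMulVec v u) v' i ∈ I)
      (o3 : dotProduct (Matrix.mulVec (tMat u v) u')
        (Matrix.mulVec (1 - Matrix.vecMulVec v u) v') = 0) :
      StarRels n R I ((FreeGroup.of (StarGen.F u v hu hv o1) : FreeGroup (StarGen n R I)) *
        FreeGroup.of (StarGen.F u' v' hu' hv' o2) * (FreeGroup.of (StarGen.F u v hu hv o1))⁻¹ *
        (FreeGroup.of (StarGen.F (Matrix.mulVec (tMat u v) u')
          (Matrix.mulVec (1 - Matrix.vecMulVec v u) v') hu'' hv'' o3))⁻¹)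
  | coinc (M : Matrix.GeneralLinearGroup (Fin n) R) (hM : M ∈ Elem n R) (a : R) (ha : a ∈ I)
      (h1 : colM M 0 ∈ Ecol n R) (h2 : ∀ i, (a • starCol M 1) i ∈ I)
      (h3 : dotProduct (colM M 0) (a • starCol M 1) = 0)
      (h4 : ∀ i, (a • colM M 0) i ∈ I) (h5 : starCol M 1 ∈ Ecol n R)
      (h6 : dotProduct (a • colM M 0) (starCol M 1) = 0) :
      StarRels n R I ((FreeGroup.of (StarGen.F (colM M 0) (a • starCol M 1) h1 h2 h3) :
          FreeGroup (StarGen n R I)) *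
        (FreeGroup.of (StarGen.S (a • colM M 0) (starCol M 1) h4 h5 h6))⁻¹)

/-- The group `St*(n, R, I)`. -/
abbrev StStar (n : ℕ) (R : Type) [CommRing R] [NeZero n] (I : Ideal R) : Type :=
  PresentedGroup {w | StarRels n R I w}

/-!
If `u` is a column of some `M ∈ E(n, R)` and `v` is a column of `M*` with a different index, then
`F(u, v·a) = S(u·a, v)`: relation (R4) says so for the indices 1 and 2, and since `n ≥ 3` signed
permutation matrices in `E(n, R)` carry any two distinct indices to these without changing the sign
of either column. All three generators in the claim are of this kind, the left-hand one because
`Me₁·r + Me₂` is a column of `M·t₁₂(r)`, whose contragredient has the same third column as `M*`.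
So the claim becomes the additivity (R2) of `S` in its first argument. -/

open Matrix

section Contragredient

variable {m R : Type*} [Fintype m] [DecidableEq m] [CommRing R]

/-- The automorphism `M ↦ M* = (M⁻¹)ᵗ` of `GL(m, R)`, under which `starCol` becomes `colM`. -/
def contragredient : GL m R →* GL m R where
  toFun M := ⟨(↑M⁻¹ : Matrix m m R)ᵀ, (↑M : Matrix m m R)ᵀ,
    by rw [← transpose_mul, Units.mul_inv, transpose_one],
    by rw [← transpose_mul, Units.inv_mul, transpose_one]⟩
  map_one' := Units.ext transpose_one
  map_mul' M N := Units.ext (transpose_mul (↑N⁻¹ : Matrix m m R) (↑M⁻¹ : Matrix m m R))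

/-- The elementary transvection `t_{ij}(r) = 1 + r·e_{ij}` as an invertible matrix. -/
def elemGL {i j : m} (hij : i ≠ j) (r : R) : GL m R :=
  SpecialLinearGroup.toGL (SpecialLinearGroup.transvection hij r)

lemma contragredient_elemGL {i j : m} (hij : i ≠ j) (r : R) :
    contragredient (elemGL hij r) = elemGL hij.symm (-r) := by
  have hinv : (elemGL hij r)⁻¹ = elemGL hij (-r) := by
    rw [elemGL, ← map_inv, SpecialLinearGroup.transvection_inv, elemGL]
  refine Units.ext ?_
  calc (↑(elemGL hij r)⁻¹ : Matrix m m R)ᵀ = (1 + single i j (-r))ᵀ := by rw [hinv]; rfl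
    _ = 1 + single j i (-r) := by rw [transpose_add, transpose_one, transpose_single]

end Contragredient

section Elementary

variable {n : ℕ} {R : Type} [CommRing R]

lemma elemGL_mem_elem {i j : Fin n} (hij : i ≠ j) (r : R) : elemGL hij r ∈ Elem n R :=
  Subgroup.subset_closure ⟨i, j, hij, r, rfl⟩

lemma contragredient_mem_elem {M : GL (Fin n) R} (hM : M ∈ Elem n R) :
    contragredient M ∈ Elem n R := by
  suffices Elem n R ≤ (Elem n R).comap contragredient from this hM
  refine (Subgroup.closure_le _).2 ?_
  rintro N ⟨i, j, hij, r, hN⟩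
  obtain rfl : N = elemGL hij r := Units.ext hN
  rw [SetLike.mem_coe, Subgroup.mem_comap, contragredient_elemGL]
  exact elemGL_mem_elem _ _

lemma colM_contragredient (M : GL (Fin n) R) (k : Fin n) :
    colM (contragredient M) k = starCol M k := rfl

lemma starCol_contragredient (M : GL (Fin n) R) (k : Fin n) :
    starCol (contragredient M) k = colM M k := rfl

lemma colM_mul_elemGL_self (M : GL (Fin n) R) {i j : Fin n} (hij : i ≠ j) (r : R) :
    colM (M * elemGL hij r) j = colM M j + r • colM M i :=
  funext fun l => mul_transvection_apply_same i j l r (M : Matrix (Fin n) (Fin n) R)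

lemma colM_mul_elemGL_of_ne (M : GL (Fin n) R) {i j k : Fin n} (hij : i ≠ j) (r : R)
    (hk : k ≠ j) : colM (M * elemGL hij r) k = colM M k :=
  funext fun l => mul_transvection_apply_of_ne i j l k hk r (M : Matrix (Fin n) (Fin n) R)

lemma starCol_mul_elemGL_of_ne (M : GL (Fin n) R) {i j k : Fin n} (hij : i ≠ j) (r : R)
    (hk : k ≠ i) : starCol (M * elemGL hij r) k = starCol M k := by
  rw [← colM_contragredient, map_mul, contragredient_elemGL, colM_mul_elemGL_of_ne _ _ _ hk,
    colM_contragredient]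

lemma exists_mem_elem_colM_eq {M : GL (Fin n) R} (hM : M ∈ Elem n R) (i j : Fin n) :
    ∃ N ∈ Elem n R, colM N j = colM M i ∧ ∀ k, k ≠ i → k ≠ j → starCol N k = starCol M k := by
  obtain rfl | hij := eq_or_ne i j
  · exact ⟨M, hM, rfl, fun _ _ _ => rfl⟩
  -- The product of the three transvections is the signed transposition of `i` and `j`.
  refine ⟨M * elemGL hij 1 * elemGL hij.symm (-1) * elemGL hij 1,
    mul_mem (mul_mem (mul_mem hM ?_) ?_) ?_, ?_, fun k hki hkj => ?_⟩
  iterate 3 exact elemGL_mem_elem _ _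
  · simp [colM_mul_elemGL_self, colM_mul_elemGL_of_ne, hij, hij.symm]
  · simp [starCol_mul_elemGL_of_ne, hki, hkj]

lemma exists_mem_elem_starCol_eq {M : GL (Fin n) R} (hM : M ∈ Elem n R) (i j : Fin n) :
    ∃ N ∈ Elem n R, starCol N j = starCol M i ∧ ∀ k, k ≠ i → k ≠ j → colM N k = colM M k := by
  obtain ⟨N, hN, hcol, hstar⟩ := exists_mem_elem_colM_eq (contragredient_mem_elem hM) i j
  refine ⟨contragredient N, contragredient_mem_elem hN, ?_⟩
  simpa only [colM_contragredient, starCol_contragredient] using ⟨hcol, hstar⟩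

lemma colM_mem_ecol [NeZero n] {M : GL (Fin n) R} (hM : M ∈ Elem n R) (k : Fin n) :
    colM M k ∈ Ecol n R := by
  obtain ⟨N, hN, hcol, -⟩ := exists_mem_elem_colM_eq hM k 0
  exact ⟨N, hN, hcol.symm⟩

lemma starCol_mem_ecol [NeZero n] {M : GL (Fin n) R} (hM : M ∈ Elem n R) (k : Fin n) :
    starCol M k ∈ Ecol n R :=
  colM_mem_ecol (contragredient_mem_elem hM) k

lemma exists_mem_elem_colM_eq_starCol_eq_of_ne {M : GL (Fin n) R} (hM : M ∈ Elem n R)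
    {i k p q : Fin n} (hik : i ≠ k) (hkp : k ≠ p) (hpq : p ≠ q) :
    ∃ N ∈ Elem n R, colM N p = colM M i ∧ starCol N q = starCol M k := by
  obtain ⟨M₁, hM₁, hcol₁, hstar₁⟩ := exists_mem_elem_colM_eq hM i p
  obtain ⟨M₂, hM₂, hstar₂, hcol₂⟩ := exists_mem_elem_starCol_eq hM₁ k q
  exact ⟨M₂, hM₂, (hcol₂ p hkp.symm hpq).trans hcol₁, hstar₂.trans (hstar₁ k hik.symm hkp)⟩

lemma exists_mem_elem_colM_eq_starCol_eq (hn : 2 < n) {M : GL (Fin n) R} (hM : M ∈ Elem n R)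
    {i k p q : Fin n} (hik : i ≠ k) (hpq : p ≠ q) :
    ∃ N ∈ Elem n R, colM N p = colM M i ∧ starCol N q = starCol M k := by
  -- Parking column `k` of `M*` at `l` avoids the direct route for `k = p`, which introduces a sign.
  obtain ⟨l, hli, hlp⟩ := Fin.exists_ne_and_ne_of_two_lt i p hn
  obtain ⟨M₁, hM₁, hstar₁, hcol₁⟩ := exists_mem_elem_starCol_eq hM k l
  obtain ⟨N, hN, hcol, hstar⟩ :=
    exists_mem_elem_colM_eq_starCol_eq_of_ne hM₁ hli.symm hlp hpq
  exact ⟨N, hN, hcol.trans (hcol₁ i hik hli.symm), hstar.trans hstar₁⟩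

end Elementary

section Relations

variable {n : ℕ} [NeZero n] {R : Type} [CommRing R] {I : Ideal R}

lemma StStar.of_S_add {u w v : Fin n → R} (hu : ∀ i, u i ∈ I) (hw : ∀ i, w i ∈ I)
    (huw : ∀ i, (u + w) i ∈ I) (hv : v ∈ Ecol n R) (huv : u ⬝ᵥ v = 0) (hwv : w ⬝ᵥ v = 0)
    (huwv : (u + w) ⬝ᵥ v = 0) :
    (PresentedGroup.of (StarGen.S (u + w) v huw hv huwv) : StStar n R I) =
      PresentedGroup.of (StarGen.S u v hu hv huv) * PresentedGroup.of (StarGen.S w v hw hv hwv) :=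
  (PresentedGroup.mk_eq_mk_of_mul_inv_mem
    (StarRels.addS u w v hu hw huw hv huv hwv huwv)).symm

lemma StStar.of_F_eq_of_S (hn : 2 < n) {M : GL (Fin n) R} (hM : M ∈ Elem n R) {i k : Fin n}
    (hik : i ≠ k) {a : R} (ha : a ∈ I) {u v : Fin n → R} (hu : u = colM M i) (hv : v = starCol M k)
    (huE : u ∈ Ecol n R) (hvI : ∀ l, (a • v) l ∈ I) (huv : u ⬝ᵥ (a • v) = 0) :
    (PresentedGroup.of (StarGen.F u (a • v) huE hvI huv) : StStar n R I) =
      PresentedGroup.of (StarGen.S (a • u) v (fun _ => I.mul_mem_right _ ha)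
        (hv ▸ starCol_mem_ecol hM k) (by rw [smul_dotProduct, ← dotProduct_smul, huv])) := by
  have zero_ne_one : (0 : Fin n) ≠ 1 := by
    obtain ⟨m, rfl⟩ := Nat.exists_eq_add_of_le' hn
    simp
  obtain ⟨N, hN, hcol, hstar⟩ := exists_mem_elem_colM_eq_starCol_eq hn hM hik zero_ne_one
  obtain rfl := hcol.trans hu.symm
  obtain rfl := hstar.trans hv.symm
  exact PresentedGroup.mk_eq_mk_of_mul_inv_mem (StarRels.coinc N hN a ha _ _ _ _ _ _)

theorem stmt13_general {M : GL (Fin n) R} (hM : M ∈ Elem n R) {i j k : Fin n} (hij : i ≠ j)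
    (hik : i ≠ k) (hjk : j ≠ k) (r : R) {a : R} (ha : a ∈ I)
    (hsum_mem : r • colM M i + colM M j ∈ Ecol n R) (hi_mem : colM M i ∈ Ecol n R)
    (hj_mem : colM M j ∈ Ecol n R) (haI : ∀ l, (a • starCol M k) l ∈ I)
    (harI : ∀ l, ((a * r) • starCol M k) l ∈ I)
    (hsum_dot : (r • colM M i + colM M j) ⬝ᵥ (a • starCol M k) = 0)
    (hi_dot : colM M i ⬝ᵥ ((a * r) • starCol M k) = 0)
    (hj_dot : colM M j ⬝ᵥ (a • starCol M k) = 0) :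
    (PresentedGroup.of (StarGen.F (r • colM M i + colM M j) (a • starCol M k)
        hsum_mem haI hsum_dot) : StStar n R I) =
      PresentedGroup.of (StarGen.F (colM M i) ((a * r) • starCol M k) hi_mem harI hi_dot) *
        PresentedGroup.of (StarGen.F (colM M j) (a • starCol M k) hj_mem haI hj_dot) := by
  have hn : 2 < n := by
    simpa using Fintype.two_lt_card_iff.2 ⟨i, j, k, hij, hik, hjk⟩
  have hcol : r • colM M i + colM M j = colM (M * elemGL hij r) j := by
    rw [colM_mul_elemGL_self, add_comm]
  have hstar : starCol M k = starCol (M * elemGL hij r) k :=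
    (starCol_mul_elemGL_of_ne M hij r hik.symm).symm
  rw [StStar.of_F_eq_of_S hn (mul_mem hM (elemGL_mem_elem hij r)) hjk ha hcol hstar,
    StStar.of_F_eq_of_S hn hM hik (I.mul_mem_right r ha) rfl rfl,
    StStar.of_F_eq_of_S hn hM hjk ha rfl rfl]
  simp only [smul_add, smul_smul]
  exact StStar.of_S_add _ _ _ _ _ _ _

end Relations

theorem stmt13 (n : ℕ) (hn : 4 ≤ n) [NeZero n] (R : Type) [CommRing R] (I : Ideal R)
    (M : Matrix.GeneralLinearGroup (Fin n) R) (hM : M ∈ Elem n R) (r a : R) (ha : a ∈ I)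
    (h1 : r • colM M 0 + colM M 1 ∈ Ecol n R) (h2 : ∀ i, (a • starCol M 2) i ∈ I)
    (h3 : dotProduct (r • colM M 0 + colM M 1) (a • starCol M 2) = 0)
    (h4 : colM M 0 ∈ Ecol n R) (h5 : ∀ i, ((a * r) • starCol M 2) i ∈ I)
    (h6 : dotProduct (colM M 0) ((a * r) • starCol M 2) = 0)
    (h7 : colM M 1 ∈ Ecol n R)
    (h8 : dotProduct (colM M 1) (a • starCol M 2) = 0) :
    (PresentedGroup.of (StarGen.F (r • colM M 0 + colM M 1) (a • starCol M 2) h1 h2 h3) :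
        StStar n R I) =
      PresentedGroup.of (StarGen.F (colM M 0) ((a * r) • starCol M 2) h4 h5 h6) *
        PresentedGroup.of (StarGen.F (colM M 1) (a • starCol M 2) h7 h2 h8) := by
  obtain ⟨m, rfl⟩ := Nat.exists_eq_add_of_le' hn
  exact stmt13_general hM (by simp) (by simp [Fin.ext_iff, Nat.mod_eq_of_lt])
    (by simp [Fin.ext_iff, Nat.mod_eq_of_lt]) r ha h1 h4 h7 h2 h5 h3 h6 h8
end

section
/- Let B be a commutative ring, a ∈ B, and let I be an ideal of B that is uniquely a-divisible, i.e., for every m ∈ I there is a unique m′ ∈ I with a·m′ = m. Let n ≥ 4 and u ∈ Bⁿ be such that a^k ∈ I(u) for some k ≥ 0. Then every v ∈ Iⁿ with uᵗv = 0 belongs to D(u). -/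
/-- The set `D(u)` of vectors decomposing as sums of vectors orthogonal to `u`
with at least two zero coordinates. -/
def Dset {n : ℕ} {B : Type} [CommRing B] (u : Fin n → B) : Set (Fin n → B) :=
  {x | ∃ (N : ℕ) (f : Fin N → (Fin n → B)),
    x = ∑ k, f k ∧
      ∀ k, dotProduct u (f k) = 0 ∧ ∃ p q : Fin n, p ≠ q ∧ f k p = 0 ∧ f k q = 0}

/-!
If `b = ∑ c_i u_i` and `uᵗw = 0`, then the Koszul relations of `u` give
`b w = ∑_{i,j} c_i w_j (u_i e_j - u_j e_i)`, where each summand is orthogonal to `u` and supported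
on at most two of the `n ≥ 4` coordinates; hence `b w ∈ D(u)`. Apply this with `b = a ^ k`:
surjectivity of multiplication by `a ^ k` on `I` gives `v = a ^ k w` with `w ∈ Iⁿ`, and injectivity
cancels `a ^ k` from `a ^ k uᵗw = uᵗv = 0`.
-/

section KoszulRelation

variable {ι R : Type*} [DecidableEq ι] [CommRing R]

/-- The Koszul relation `u_i e_j - u_j e_i` between the coordinates of `u`; these are the basic
vectors from which the decompositions in `D(u)` are built. -/
def koszulRelation (u : ι → R) (i j : ι) : ι → R :=
  Pi.single j (u i) - Pi.single i (u j)

theorem koszulRelation_apply_of_ne (u : ι → R) {i j l : ι} (hi : l ≠ i) (hj : l ≠ j) :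
    koszulRelation u i j l = 0 := by
  simp [koszulRelation, hi, hj]

variable [Fintype ι]

theorem dotProduct_koszulRelation (u : ι → R) (i j : ι) : u ⬝ᵥ koszulRelation u i j = 0 := by
  simp [koszulRelation, dotProduct_sub, mul_comm]

theorem sum_smul_koszulRelation (u c w : ι → R) :
    ∑ i, ∑ j, (c i * w j) • koszulRelation u i j = (c ⬝ᵥ u) • w - (u ⬝ᵥ w) • c := by
  have sum_left (l : ι) :
      ∑ i, ∑ j, c i * w j * (Pi.single j (u i) : ι → R) l = (c ⬝ᵥ u) * w l := by
    simp [Pi.single_apply, dotProduct, Finset.sum_mul, mul_right_comm]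
  have sum_right (l : ι) :
      ∑ i, ∑ j, c i * w j * (Pi.single i (u j) : ι → R) l = (u ⬝ᵥ w) * c l := by
    rw [Finset.sum_comm]
    simp [Pi.single_apply, dotProduct, Finset.mul_sum, mul_comm, mul_left_comm]
  ext l
  simp only [koszulRelation, Finset.sum_apply, Pi.smul_apply, Pi.sub_apply, smul_eq_mul, mul_sub,
    Finset.sum_sub_distrib, sum_left, sum_right]

end KoszulRelation

theorem exists_ne_ne_of_four_le_card {ι : Type*} [Fintype ι] (hι : 4 ≤ Fintype.card ι) (i j : ι) :
    ∃ p q : ι, p ≠ q ∧ (p ≠ i ∧ p ≠ j) ∧ (q ≠ i ∧ q ≠ j) := by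
  classical
  have one_lt_card_compl : 1 < ({i, j}ᶜ : Finset ι).card := by
    have := Finset.card_le_two (a := i) (b := j)
    rw [Finset.card_compl]
    lia
  obtain ⟨p, hp, q, hq, hpq⟩ := Finset.one_lt_card.1 one_lt_card_compl
  exact ⟨p, q, hpq, by simpa using hp, by simpa using hq⟩

section Dset

variable {B : Type} [CommRing B] {n : ℕ} {u : Fin n → B}

theorem sum_mem_Dset {κ : Type*} [Fintype κ] {f : κ → Fin n → B}
    (orthogonal : ∀ k, u ⬝ᵥ f k = 0)
    (two_zeros : ∀ k, ∃ p q : Fin n, p ≠ q ∧ f k p = 0 ∧ f k q = 0) :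
    ∑ k, f k ∈ Dset u :=
  let e := (Fintype.equivFin κ).symm
  ⟨Fintype.card κ, f ∘ e, (e.sum_comp f).symm, fun k => ⟨orthogonal (e k), two_zeros (e k)⟩⟩

theorem smul_mem_Dset_of_mem_span (hn : 4 ≤ n) {b : B} (hb : b ∈ Ideal.span (Set.range u))
    {w : Fin n → B} (hw : u ⬝ᵥ w = 0) : b • w ∈ Dset u := by
  obtain ⟨c, hc⟩ := Ideal.mem_span_range_iff_exists_fun.1 hb
  have decomposition :
      b • w = ∑ p : Fin n × Fin n, (c p.1 * w p.2) • koszulRelation u p.1 p.2 := by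
    rw [Fintype.sum_prod_type, sum_smul_koszulRelation, hw, zero_smul, sub_zero, dotProduct, hc]
  rw [decomposition]
  refine sum_mem_Dset (fun p => ?_) (fun ⟨i, j⟩ => ?_)
  · rw [dotProduct_smul, dotProduct_koszulRelation, smul_zero]
  · obtain ⟨p, q, hpq, ⟨hpi, hpj⟩, ⟨hqi, hqj⟩⟩ :=
      exists_ne_ne_of_four_le_card (by rwa [Fintype.card_fin]) i j
    exact ⟨p, q, hpq, by simp [koszulRelation_apply_of_ne u hpi hpj],
      by simp [koszulRelation_apply_of_ne u hqi hqj]⟩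

end Dset

section UniquelyDivisible

variable {R : Type*} [CommRing R] {a : R} {I : Ideal R}

theorem bijOn_mul_left_of_existsUnique (h : ∀ m ∈ I, ∃! m' : R, m' ∈ I ∧ a * m' = m) :
    Set.BijOn (a * ·) I I :=
  ⟨fun _ hm => I.mul_mem_left a hm,
    fun _ hx _ hy hxy => (h _ (I.mul_mem_left a hy)).unique ⟨hx, hxy⟩ ⟨hy, rfl⟩,
    fun m hm => (h m hm).exists⟩

theorem bijOn_pow_mul_left (h : Set.BijOn (a * ·) I I) (k : ℕ) : Set.BijOn (a ^ k * ·) I I := by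
  simpa only [mul_left_iterate] using h.iterate k

theorem exists_dotProduct_eq_zero_and_smul_eq {ι : Type*} [Fintype ι]
    (h : Set.BijOn (a * ·) I I) {u v : ι → R} (hv : ∀ i, v i ∈ I) (huv : u ⬝ᵥ v = 0) :
    ∃ w : ι → R, u ⬝ᵥ w = 0 ∧ a • w = v := by
  choose w hwI haw using fun i => h.surjOn (hv i)
  have smul_w : a • w = v := funext haw
  have dotProduct_mem : u ⬝ᵥ w ∈ I := I.sum_mem fun i _ => I.mul_mem_left (u i) (hwI i)
  have mul_dotProduct : a * (u ⬝ᵥ w) = a * 0 := by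
    rw [← smul_eq_mul, ← dotProduct_smul, smul_w, huv, mul_zero]
  exact ⟨w, h.injOn dotProduct_mem I.zero_mem mul_dotProduct, smul_w⟩

end UniquelyDivisible

theorem stmt17 (B : Type) [CommRing B] (a : B) (I : Ideal B)
    (hdiv : ∀ m ∈ I, ∃! m' : B, m' ∈ I ∧ a * m' = m)
    (n : ℕ) (hn : 4 ≤ n) (u : Fin n → B) (k : ℕ)
    (hk : a ^ k ∈ Ideal.span (Set.range u))
    (v : Fin n → B) (hv : ∀ i, v i ∈ I) (ho : dotProduct u v = 0) :
    v ∈ Dset u := by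
  have bijOn_pow : Set.BijOn (a ^ k * ·) I I :=
    bijOn_pow_mul_left (bijOn_mul_left_of_existsUnique hdiv) k
  obtain ⟨w, hw, rfl⟩ := exists_dotProduct_eq_zero_and_smul_eq bijOn_pow hv ho
  exact smul_mem_Dset_of_mem_span hn hk hw
end
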